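/- arXiv:1412.7607 — 3 statements merged into one kernel-verified Lean document; each statement's English description precedes it below -/
import Mathlib

section
/- For all integers i ≥ 0, j ≥ 0 and k ≥ 1: (a) Q_{(i,j,k)}(1) = −2, and Q_{(i,j,k)} has a real root strictly greater than 1; (b) a positive real number λ is a root of Q_{(i,j,k)} if and only if 1/λ is a root of Q_{(i,j,k)}; consequently, the largest real root of Q_{(i,j,k)} is greater than 1 and its reciprocal is the smallest positive real root of Q_{(i,j,k)}. -/
/-- The clique polynomial `Q_{(i,j,k)}(t) = t^{i+j+2k} - t^{i+j+k} - t^{j+k} - t^{i+k} - t^k + 1`,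
as a real function. -/
noncomputable def Qfun (i j k : ℕ) (t : ℝ) : ℝ :=
  t ^ (i + j + 2 * k) - t ^ (i + j + k) - t ^ (j + k) - t ^ (i + k) - t ^ k + 1

theorem Qfun_recip (i j k : ℕ) (l : ℝ) (hl : 0 < l) :
    l ^ (i + j + 2 * k) * Qfun i j k (1 / l) = Qfun i j k l := by
  unfold Qfun
  have h : l ≠ 0 := hl.ne'
  simp only [one_div, inv_pow]
  have e : ∀ a b : ℕ, l ^ (a + b) * (l ^ a)⁻¹ = l ^ b := by
    intro a b
    rw [pow_add]
    field_simp
  have e0 := e (i + j + 2 * k) 0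
  have e1 := e (i + j + k) k
  have e2 := e (j + k) (i + k)
  have e3 := e (i + k) (j + k)
  have e4 := e k (i + j + k)
  rw [show i + j + 2 * k + 0 = i + j + 2 * k by ring, pow_zero] at e0
  rw [show i + j + k + k = i + j + 2 * k by ring] at e1
  rw [show j + k + (i + k) = i + j + 2 * k by ring] at e2
  rw [show i + k + (j + k) = i + j + 2 * k by ring] at e3
  rw [show k + (i + j + k) = i + j + 2 * k by ring] at e4
  linear_combination e0 - e1 - e2 - e3 - e4

theorem Qfun_pos (i j k : ℕ) (hk : 1 ≤ k) (t : ℝ) (ht : 4 ≤ t) : 0 < Qfun i j k t := by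
  unfold Qfun
  have h1 : (1 : ℝ) ≤ t := by linarith
  have m : ∀ a, a ≤ i + j + k → t ^ a ≤ t ^ (i + j + k) := fun a ha => pow_le_pow_right₀ h1 ha
  have a1 := m (j + k) (by omega)
  have a2 := m (i + k) (by omega)
  have a3 := m k (by omega)
  have a4 : t ^ (i + j + k + 1) ≤ t ^ (i + j + 2 * k) := pow_le_pow_right₀ h1 (by omega)
  have a5 : 0 < t ^ (i + j + k) := by positivity
  rw [pow_succ] at a4
  nlinarith

theorem Qfun_cont (i j k : ℕ) : Continuous (Qfun i j k) := by
  unfold Qfun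
  fun_prop

theorem stmt5 (i j k : ℕ) (hk : 1 ≤ k) :
    Qfun i j k 1 = -2 ∧
    (∃ r : ℝ, 1 < r ∧ Qfun i j k r = 0) ∧
    (∀ l : ℝ, 0 < l → (Qfun i j k l = 0 ↔ Qfun i j k (1 / l) = 0)) ∧
    ∃ L : ℝ, Qfun i j k L = 0 ∧ (∀ r : ℝ, Qfun i j k r = 0 → r ≤ L) ∧ 1 < L ∧
      Qfun i j k (1 / L) = 0 ∧ ∀ r : ℝ, 0 < r → Qfun i j k r = 0 → 1 / L ≤ r := by
  have h1 : Qfun i j k 1 = -2 := by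
    unfold Qfun
    norm_num
  have hroot : ∃ r ∈ Set.Icc (1 : ℝ) 4, Qfun i j k r = 0 := by
    have := intermediate_value_Icc (show (1 : ℝ) ≤ 4 by norm_num) (Qfun_cont i j k).continuousOn
    exact this ⟨by rw [h1]; norm_num, (Qfun_pos i j k hk 4 le_rfl).le⟩
  have hne : ∀ r : ℝ, 1 ≤ r → Qfun i j k r = 0 → 1 < r := by
    intro r hr h0
    rcases hr.eq_or_lt with h | h
    · rw [← h, h1] at h0
      norm_num at h0
    · exact h
  have hrec : ∀ l : ℝ, 0 < l → (Qfun i j k l = 0 ↔ Qfun i j k (1 / l) = 0) := by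
    intro l hl
    rw [← Qfun_recip i j k l hl, mul_eq_zero]
    exact or_iff_right (by positivity)
  have hc : IsCompact (Set.Icc (1 : ℝ) 4 ∩ {r | Qfun i j k r = 0}) :=
    isCompact_Icc.inter_right (isClosed_eq (Qfun_cont i j k) continuous_const)
  obtain ⟨r0, hr0, hr0'⟩ := hroot
  obtain ⟨L, ⟨hL, hL0⟩, hmax⟩ := hc.exists_isGreatest ⟨r0, hr0, hr0'⟩
  have hL0' : Qfun i j k L = 0 := hL0
  have hL1 := hne L hL.1 hL0'
  have hmax' : ∀ r : ℝ, Qfun i j k r = 0 → r ≤ L := by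
    intro r hr
    by_cases h : r < 1
    · linarith
    · refine hmax ⟨⟨not_lt.mp h, ?_⟩, hr⟩
      by_contra h4
      have := Qfun_pos i j k hk r (not_le.mp h4).le
      linarith
  refine ⟨h1, ⟨r0, hne r0 hr0.1 hr0', hr0'⟩, hrec, L, hL0', hmax', hL1,
    (hrec L (by linarith)).1 hL0', ?_⟩
  intro r hr h0
  have := hmax' _ ((hrec r hr).1 h0)
  exact (one_div_le hr (by linarith)).1 this
end

section
/- For each integer g ≥ 2, let λ_g be the largest real root of the polynomial t^{2g} − t^{g+1} − t^{g} − t^{g−1} + 1 (such a root exists and satisfies λ_g > 1). Then lim_{g→∞} g · log λ_g = log((3 + √5)/2). -/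
open Filter

/-- The Lanneau–Thiffeault polynomial `f_{(g,1)}(t) = t^{2g} - t^{g+1} - t^g - t^{g-1} + 1`,
as a real function. -/
noncomputable def LTfun (g : ℕ) (t : ℝ) : ℝ :=
  t ^ (2 * g) - t ^ (g + 1) - t ^ g - t ^ (g - 1) + 1

theorem LT_bound (g : ℕ) (hg : 2 ≤ g) (t : ℝ) (ht : 1 ≤ t) (h : LTfun g t = 0) :
    t ^ (g - 1) < 3 := by
  obtain ⟨n, rfl⟩ : ∃ n, g = n + 1 := ⟨g - 1, by omega⟩
  unfold LTfun at h
  simp only [Nat.add_sub_cancel] at h ⊢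
  by_contra! hy
  have e : t ^ (2 * (n + 1)) - t ^ (n + 1 + 1) - t ^ (n + 1) - t ^ n + 1
      = t ^ n * (t ^ n * t ^ 2 - t ^ 2 - t - 1) + 1 := by ring
  rw [e] at h
  have h2 : 0 ≤ t ^ n * t ^ 2 - t ^ 2 - t - 1 := by
    nlinarith [mul_le_mul_of_nonneg_right hy (sq_nonneg t)]
  nlinarith [mul_nonneg (by linarith : 0 ≤ t ^ n) h2]

theorem LT_lt3 (g : ℕ) (hg : 2 ≤ g) (t : ℝ) (ht : 1 ≤ t) (h : LTfun g t = 0) :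
    t < 3 :=
  lt_of_le_of_lt (le_self_pow₀ ht (by omega)) (LT_bound g hg t ht h)

theorem LT_pow (g : ℕ) (hg : 2 ≤ g) (t : ℝ) (ht : 1 ≤ t) (h : LTfun g t = 0) :
    t ^ g < 9 := by
  have h1 := LT_bound g hg t ht h
  have h2 := LT_lt3 g hg t ht h
  have : t ^ g = t ^ (g - 1) * t := by rw [← pow_succ]; congr 1; omega
  rw [this]; nlinarith

theorem LT_formula (g : ℕ) (hg : 2 ≤ g) (t : ℝ) (ht : 1 ≤ t) (h : LTfun g t = 0) :
    t ^ g = ((t + 1 + t⁻¹) + Real.sqrt ((t + 1 + t⁻¹) ^ 2 - 4)) / 2 := by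
  have hx : 1 ≤ t ^ g := one_le_pow₀ ht
  have t0 : t ≠ 0 := by linarith
  have e1 : t ^ (g - 1) = t ^ g * t⁻¹ := by
    have : t ^ g = t ^ (g - 1) * t := by rw [← pow_succ]; congr 1; omega
    rw [this]; field_simp
  have e2 : t ^ (2 * g) = t ^ g * t ^ g := by ring
  unfold LTfun at h
  rw [e1, e2, pow_succ] at h
  generalize t ^ g = x at *
  generalize hs : t + 1 + t⁻¹ = s
  have h' : x * x - s * x + 1 = 0 := by rw [← hs]; linarith
  have : s ^ 2 - 4 = (2 * x - s) ^ 2 := by nlinarith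
  rw [this, Real.sqrt_sq (by nlinarith)]
  ring

theorem LT_cont (g : ℕ) : Continuous (LTfun g) := by
  unfold LTfun; fun_prop

theorem LT_exists (g : ℕ) (hg : 2 ≤ g) :
    ∃ L : ℝ, 1 < L ∧ LTfun g L = 0 ∧ ∀ r : ℝ, LTfun g r = 0 → r ≤ L := by
  have f1 : LTfun g 1 = -1 := by unfold LTfun; norm_num
  have f3 : 0 ≤ LTfun g 3 := by
    obtain ⟨n, rfl⟩ : ∃ n, g = n + 1 := ⟨g - 1, by omega⟩
    unfold LTfun
    simp only [Nat.add_sub_cancel]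
    have hy : (3:ℝ) ≤ 3 ^ n := le_self_pow₀ (by norm_num) (by omega)
    have e : (3:ℝ) ^ (2 * (n + 1)) - 3 ^ (n + 1 + 1) - 3 ^ (n + 1) - 3 ^ n + 1
      = 3 ^ n * (3 ^ n * 9 - 13) + 1 := by ring
    rw [e]; nlinarith
  obtain ⟨c, hc, hc0⟩ := intermediate_value_Icc (by norm_num : (1:ℝ) ≤ 3)
    (LT_cont g).continuousOn (show (0:ℝ) ∈ Set.Icc (LTfun g 1) (LTfun g 3) from
      ⟨by rw [f1]; norm_num, f3⟩)
  have hK : IsCompact (Set.Icc (1:ℝ) 3 ∩ LTfun g ⁻¹' {0}) :=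
    isCompact_Icc.inter_right (isClosed_singleton.preimage (LT_cont g))
  obtain ⟨L, ⟨hL, hL0⟩, hmax⟩ := hK.exists_isGreatest ⟨c, hc, hc0⟩
  refine ⟨L, lt_of_le_of_ne hL.1 ?_, hL0, ?_⟩
  · rintro rfl
    have : LTfun g 1 = 0 := hL0
    linarith
  · intro r hr
    by_cases h : 1 ≤ r
    · exact hmax ⟨⟨h, (LT_lt3 g hg r h hr).le⟩, hr⟩
    · linarith [hL.1]

theorem stmt10 :
    (∀ g : ℕ, 2 ≤ g →
      ∃ L : ℝ, 1 < L ∧ LTfun g L = 0 ∧ ∀ r : ℝ, LTfun g r = 0 → r ≤ L) ∧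
    ∀ lam : ℕ → ℝ,
      (∀ g : ℕ, 2 ≤ g → LTfun g (lam g) = 0 ∧ ∀ r : ℝ, LTfun g r = 0 → r ≤ lam g) →
      Tendsto (fun g : ℕ => (g : ℝ) * Real.log (lam g)) atTop
        (nhds (Real.log ((3 + Real.sqrt 5) / 2))) := by
  refine ⟨LT_exists, fun lam hlam => ?_⟩
  have h1 : ∀ g, 2 ≤ g → 1 ≤ lam g := fun g hg => by
    obtain ⟨L, hL, h0, -⟩ := LT_exists g hg
    linarith [(hlam g hg).2 L h0]
  have hlog : Tendsto (fun g => Real.log (lam g)) atTop (nhds 0) := by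
    refine tendsto_of_tendsto_of_tendsto_of_le_of_le' tendsto_const_nhds
      (tendsto_const_div_atTop_nhds_zero_nat (Real.log 9)) ?_ ?_
    · filter_upwards [eventually_ge_atTop 2] with g hg
      exact Real.log_nonneg (h1 g hg)
    · filter_upwards [eventually_ge_atTop 2] with g hg
      have hg0 : (0:ℝ) < g := by positivity
      rw [le_div_iff₀ hg0, mul_comm, ← Real.log_pow]
      have := h1 g hg
      exact Real.log_le_log (by positivity) (LT_pow g hg _ this (hlam g hg).1).le
  have hl : Tendsto lam atTop (nhds 1) := by
    have := (Real.continuous_exp.tendsto 0).comp hlog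
    rw [Real.exp_zero] at this
    refine this.congr' ?_
    filter_upwards [eventually_ge_atTop 2] with g hg
    exact Real.exp_log (by linarith [h1 g hg])
  have hs : Tendsto (fun g => lam g + 1 + (lam g)⁻¹) atTop (nhds 3) := by
    have := (hl.add_const 1).add (hl.inv₀ one_ne_zero)
    norm_num at this
    exact this
  have hx := ((hs.add (((hs.pow 2).sub_const 4).sqrt)).div_const 2).log (by positivity)
  norm_num at hx
  refine hx.congr' ?_
  filter_upwards [eventually_ge_atTop 2] with g hg
  rw [← Real.log_pow, LT_formula g hg _ (h1 g hg) (hlam g hg).1]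
end

section
/- For each integer g ≥ 1, let λ_g be the largest real root of the polynomial t^{2g+4} − t^{g+4} − t^{g+2} − t^{g} + 1 (such a root exists and satisfies λ_g > 1). Then lim_{g→∞} g · log λ_g = log((3 + √5)/2). -/
open Filter

/-- The polynomial `t^{2g+4} - t^{g+4} - t^{g+2} - t^g + 1`, as a real function. -/
noncomputable def Pfun (g : ℕ) (t : ℝ) : ℝ :=
  t ^ (2 * g + 4) - t ^ (g + 4) - t ^ (g + 2) - t ^ g + 1

lemma Pfun_eq (g : ℕ) (t : ℝ) :
    Pfun g t = (t ^ g) ^ 2 * t ^ 4 - t ^ g * (t ^ 4 + t ^ 2 + 1) + 1 := by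
  unfold Pfun; ring

lemma root_lt (g : ℕ) (t : ℝ) (ht : 1 < t) (h : Pfun g t = 0) : t ^ g < 3 := by
  rw [Pfun_eq] at h
  have hy : 1 ≤ t ^ g := one_le_pow₀ ht.le
  by_contra hc
  push Not at hc
  have h2 : 1 < t ^ 2 := one_lt_pow₀ ht (by norm_num)
  have h4 : t ^ 2 < t ^ 4 := pow_lt_pow_right₀ ht (by norm_num)
  have : 0 ≤ t ^ g * (t ^ g * t ^ 4 - (t ^ 4 + t ^ 2 + 1)) := by
    apply mul_nonneg (by linarith)
    nlinarith
  nlinarith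

lemma ex_root (g : ℕ) (hg : 1 ≤ g) :
    ∃ L : ℝ, 1 < L ∧ Pfun g L = 0 ∧ ∀ r : ℝ, Pfun g r = 0 → r ≤ L := by
  have hcont : Continuous (Pfun g) := by unfold Pfun; fun_prop
  have h1 : Pfun g 1 = -1 := by rw [Pfun_eq]; norm_num
  have h3 : 0 ≤ Pfun g 3 := by
    rw [Pfun_eq]
    have : (3:ℝ) ≤ 3 ^ g := le_self_pow₀ (by norm_num) (by omega)
    nlinarith
  obtain ⟨z, hz, hz0⟩ := intermediate_value_Icc (by norm_num : (1:ℝ) ≤ 3) hcont.continuousOn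
    (show (0:ℝ) ∈ Set.Icc (Pfun g 1) (Pfun g 3) from ⟨by rw [h1]; norm_num, h3⟩)
  have hK : IsCompact (Set.Icc (1:ℝ) 3 ∩ {r | Pfun g r = 0}) :=
    isCompact_Icc.inter_right (isClosed_eq hcont continuous_const)
  obtain ⟨L, ⟨hL, hL0⟩, hmax⟩ := hK.exists_isGreatest ⟨z, hz, hz0⟩
  have hL1 : 1 < L := by
    rcases hL.1.eq_or_lt with h | h
    · subst h
      simp only [Set.mem_setOf_eq] at hL0
      rw [h1] at hL0; norm_num at hL0
    · exact h
  refine ⟨L, hL1, hL0, fun r hr => ?_⟩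
  rcases le_or_gt r 1 with h | h
  · linarith
  · have := root_lt g r h hr
    have h' : r ≤ r ^ g := le_self_pow₀ h.le (by omega)
    exact hmax ⟨⟨h.le, by linarith⟩, hr⟩

theorem stmt11 :
    (∀ g : ℕ, 1 ≤ g →
      ∃ L : ℝ, 1 < L ∧ Pfun g L = 0 ∧ ∀ r : ℝ, Pfun g r = 0 → r ≤ L) ∧
    ∀ lam : ℕ → ℝ,
      (∀ g : ℕ, 1 ≤ g → Pfun g (lam g) = 0 ∧ ∀ r : ℝ, Pfun g r = 0 → r ≤ lam g) →
      Tendsto (fun g : ℕ => (g : ℝ) * Real.log (lam g)) atTop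
        (nhds (Real.log ((3 + Real.sqrt 5) / 2))) := by
  refine ⟨ex_root, fun lam H => ?_⟩
  have hx1 : ∀ g, 1 ≤ g → 1 < lam g := fun g hg => by
    obtain ⟨L, h1, h0, -⟩ := ex_root g hg
    exact h1.trans_le ((H g hg).2 L h0)
  have hy3 : ∀ g, 1 ≤ g → lam g ^ g < 3 := fun g hg =>
    root_lt g _ (hx1 g hg) (H g hg).1
  have hx : Tendsto lam atTop (nhds 1) := by
    have hlim : Tendsto (fun g : ℕ => Real.exp (Real.log 3 / (g:ℝ))) atTop (nhds 1) := by
      have := (Real.continuous_exp.tendsto 0).comp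
        (tendsto_const_div_atTop_nhds_zero_nat (Real.log 3))
      rw [Real.exp_zero] at this
      exact this
    refine tendsto_of_tendsto_of_tendsto_of_le_of_le' tendsto_const_nhds hlim ?_ ?_
    · filter_upwards [eventually_ge_atTop 1] with g hg using (hx1 g hg).le
    · filter_upwards [eventually_ge_atTop 1] with g hg
      have hp : 0 < lam g := by linarith [hx1 g hg]
      rw [← Real.log_le_iff_le_exp hp, le_div_iff₀ (by positivity), mul_comm, ← Real.log_pow]
      exact Real.log_le_log (by positivity) (hy3 g hg).le
  have hs : Real.sqrt 5 ^ 2 = 5 := Real.sq_sqrt (by norm_num)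
  have hs2 : 2 < Real.sqrt 5 := Real.lt_sqrt_of_sq_lt (by norm_num)
  have hy : Tendsto (fun g => lam g ^ g) atTop (nhds ((3 + Real.sqrt 5) / 2)) := by
    rw [tendsto_iff_dist_tendsto_zero]
    have hb : Tendsto (fun g => 2 * (9 * (lam g ^ 4 - 1) + 3 * (lam g ^ 4 + lam g ^ 2 - 2)))
        atTop (nhds 0) := by
      have hc : Continuous (fun x : ℝ => 2 * (9 * (x ^ 4 - 1) + 3 * (x ^ 4 + x ^ 2 - 2))) := by
        fun_prop
      have := (hc.tendsto 1).comp hx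
      norm_num at this
      exact this
    refine squeeze_zero' (Eventually.of_forall fun _ => dist_nonneg) ?_ hb
    filter_upwards [eventually_ge_atTop 1] with g hg
    have h0 := (H g hg).1
    rw [Pfun_eq] at h0
    have h3 := hy3 g hg
    have h1 : 1 ≤ lam g ^ g := one_le_pow₀ (hx1 g hg).le
    have h2 : 1 < lam g ^ 2 := one_lt_pow₀ (hx1 g hg) (by norm_num)
    have h4 : 1 < lam g ^ 4 := one_lt_pow₀ (hx1 g hg) (by norm_num)
    rw [Real.dist_eq]
    generalize lam g ^ g = y at *
    generalize lam g ^ 4 = a at *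
    generalize lam g ^ 2 = b at *
    have hfac : (y - (3 + Real.sqrt 5) / 2) * (y - (3 - Real.sqrt 5) / 2)
        = y * (a + b - 2) - y ^ 2 * (a - 1) := by nlinarith
    have hq : 1 / 2 ≤ y - (3 - Real.sqrt 5) / 2 := by linarith
    have hA : |y * (a + b - 2) - y ^ 2 * (a - 1)| ≤ 9 * (a - 1) + 3 * (a + b - 2) := by
      have e1 : y * (a + b - 2) ≤ 3 * (a + b - 2) :=
        mul_le_mul_of_nonneg_right h3.le (by linarith)
      have e2 : y ^ 2 * (a - 1) ≤ 9 * (a - 1) :=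
        mul_le_mul_of_nonneg_right (by nlinarith) (by linarith)
      have e3 : 0 ≤ y * (a + b - 2) := mul_nonneg (by linarith) (by linarith)
      have e4 : 0 ≤ y ^ 2 * (a - 1) := mul_nonneg (by positivity) (by linarith)
      rw [abs_le]; constructor <;> linarith
    rw [← hfac, abs_mul, abs_of_nonneg (by linarith : 0 ≤ y - (3 - Real.sqrt 5) / 2)] at hA
    have := mul_le_mul_of_nonneg_left hq (abs_nonneg (y - (3 + Real.sqrt 5) / 2))
    linarith
  have := hy.log (by positivity)
  simpa only [Real.log_pow] using this
end
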